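/- Let m,n ≥ 2 and set k₀ = ⌈m/min(m,n)⌉. Then every quantum channel L ∈ L_{m,n} with rank Z(L) ≤ k₀ is an extreme point of L_{m,n}. -/

import Mathlib

open Matrix
open scoped ComplexOrder

/-- The Choi matrix of a linear map `L` from `m × m` to `n × n` complex matrices:
its `((i,p),(j,q))` entry is the `(p,q)` entry of `L(E_{ij})`. -/
def choi (m n : ℕ) (L : Matrix (Fin m) (Fin m) ℂ →ₗ[ℂ] Matrix (Fin n) (Fin n) ℂ) :
    Matrix (Fin m × Fin n) (Fin m × Fin n) ℂ :=
  Matrix.of fun ip jq => L (Matrix.single ip.1 jq.1 (1 : ℂ)) ip.2 jq.2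

/-- `L` is a quantum channel: it admits a Kraus representation
`L(X) = ∑ Aᵢ X Aᵢ*` with `∑ Aᵢ* Aᵢ = I`. -/
def IsChannel (m n : ℕ) (L : Matrix (Fin m) (Fin m) ℂ →ₗ[ℂ] Matrix (Fin n) (Fin n) ℂ) : Prop :=
  ∃ (k : ℕ) (A : Fin k → Matrix (Fin n) (Fin m) ℂ),
    (∀ X, L X = ∑ i, A i * X * (A i)ᴴ) ∧ ∑ i, (A i)ᴴ * A i = 1

/-- `L` is an extreme point of the convex set of quantum channels. -/
def IsExtremeChannel (m n : ℕ)
    (L : Matrix (Fin m) (Fin m) ℂ →ₗ[ℂ] Matrix (Fin n) (Fin n) ℂ) : Prop :=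
  IsChannel m n L ∧
    ∀ L₁ L₂ : Matrix (Fin m) (Fin m) ℂ →ₗ[ℂ] Matrix (Fin n) (Fin n) ℂ,
      IsChannel m n L₁ → IsChannel m n L₂ → ∀ t : ℝ, 0 < t → t < 1 →
      L = (t : ℂ) • L₁ + ((1 - t : ℝ) : ℂ) • L₂ → L₁ = L ∧ L₂ = L

/-- A matrix factors on the left through any matrix with smaller kernel. -/
lemma Matrix.exists_eq_mul_of_ker_le {K ι κ l : Type*} [Field K] [Fintype ι] [Fintype κ]
    [DecidableEq ι] [DecidableEq κ]
    (B : Matrix κ ι K) (Y : Matrix l ι K) (h : ∀ x, B *ᵥ x = 0 → Y *ᵥ x = 0) :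
    ∃ X : Matrix l κ K, Y = X * B := by
  obtain ⟨g, hg⟩ := LinearMap.exists_extend
    (((LinearMap.ker B.mulVecLin).liftQ Y.mulVecLin (fun x hx => h x hx)).comp
      B.mulVecLin.quotKerEquivRange.symm.toLinearMap)
  refine ⟨LinearMap.toMatrix' g, Matrix.ext_of_mulVec_single fun i => ?_⟩
  rw [← mulVec_mulVec, LinearMap.toMatrix'_mulVec]
  have := LinearMap.congr_fun hg
    (B.mulVecLin.quotKerEquivRange (Submodule.Quotient.mk (Pi.single i 1)))
  rw [LinearMap.comp_apply, LinearMap.comp_apply, LinearEquiv.coe_coe,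
    LinearEquiv.symm_apply_apply] at this
  exact this.symm

/-- A positive semidefinite matrix is `B * Bᴴ` with as many columns in `B` as its rank. -/
lemma Matrix.PosSemidef.exists_eq_mul_conjTranspose {ι : Type*} [Fintype ι] [DecidableEq ι]
    {Z : Matrix ι ι ℂ} (hZ : Z.PosSemidef) :
    ∃ B : Matrix ι (Fin Z.rank) ℂ, Z = B * Bᴴ := by
  have hH := hZ.isHermitian
  let e : Fin Z.rank ≃ {i // hH.eigenvalues i ≠ 0} :=
    (Fintype.equivFinOfCardEq hH.rank_eq_card_non_zero_eigs.symm).symm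
  let U : Matrix ι ι ℂ := hH.eigenvectorUnitary
  refine ⟨Matrix.of fun i k => U i (e k) * (Real.sqrt (hH.eigenvalues (e k)) : ℂ), ?_⟩
  ext i j
  have hs : Z i j = ∑ k, U i k * (hH.eigenvalues k : ℂ) * star (U j k) := by
    conv_lhs => rw [hH.spectral_theorem]
    simp [Unitary.conjStarAlgAut_apply, Matrix.mul_apply, Matrix.diagonal, U,
      Matrix.star_apply]
  rw [hs, Matrix.mul_apply]
  have hsub : ∑ k, U i k * (hH.eigenvalues k : ℂ) * star (U j k)
      = ∑ k : {k // hH.eigenvalues k ≠ 0}, U i k * (hH.eigenvalues k : ℂ) * star (U j k) := by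
    rw [← Finset.sum_filter_of_ne (p := fun k => hH.eigenvalues k ≠ 0)]
    · exact Finset.sum_subtype _ (by simp) _
    · intro k _ hk h0
      simp [h0] at hk
  rw [hsub, ← e.sum_comp]
  refine Finset.sum_congr rfl fun k _ => ?_
  have hsq : ((Real.sqrt (hH.eigenvalues (e k)) : ℝ) : ℂ) * (Real.sqrt (hH.eigenvalues (e k)) : ℝ)
      = (hH.eigenvalues (e k) : ℂ) := by
    rw [← Complex.ofReal_mul, Real.mul_self_sqrt (hZ.eigenvalues_nonneg _)]
  simp only [of_apply, conjTranspose_apply, star_mul', ← hsq]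
  simp
  ring

/-- Subtracting a Hermitian matrix from its largest eigenvalue gives a singular positive
semidefinite matrix. -/
lemma Matrix.IsHermitian.exists_smul_one_sub_posSemidef {ι : Type*} [Fintype ι] [DecidableEq ι]
    [Nonempty ι] {M : Matrix ι ι ℂ} (hM : M.IsHermitian) :
    ∃ c : ℝ, ((c : ℂ) • 1 - M).PosSemidef ∧ ((c : ℂ) • 1 - M).rank < Fintype.card ι := by
  obtain ⟨i₀, hi₀⟩ := Finite.exists_max hM.eigenvalues
  let U : Matrix ι ι ℂ := hM.eigenvectorUnitary
  let d : ι → ℂ := fun i => ((hM.eigenvalues i₀ - hM.eigenvalues i : ℝ) : ℂ)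
  have hUU : U * Uᴴ = 1 := Unitary.coe_mul_star_self hM.eigenvectorUnitary
  have hd : diagonal d =
      (hM.eigenvalues i₀ : ℂ) • 1 - diagonal (RCLike.ofReal ∘ hM.eigenvalues) := by
    ext i j
    by_cases hij : i = j <;> simp [hij, d, diagonal]
  have key : (hM.eigenvalues i₀ : ℂ) • 1 - M = U * diagonal d * Uᴴ := by
    rw [hd, Matrix.mul_sub, Matrix.sub_mul]
    congr 1
    · simp [hUU]
    · exact hM.spectral_theorem
  refine ⟨hM.eigenvalues i₀, ?_, ?_⟩ <;> rw [key]
  · refine PosSemidef.mul_mul_conjTranspose_same (PosSemidef.diagonal fun i => ?_) U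
    simpa [d] using hi₀ i
  · calc _ ≤ (U * diagonal d).rank := rank_mul_le_left _ _
      _ ≤ (diagonal d).rank := rank_mul_le_right _ _
      _ = Fintype.card {i // d i ≠ 0} := rank_diagonal d
      _ < _ := Fintype.card_subtype_lt (x := i₀) (by simp [d])

/-- A positive semidefinite matrix whose partial trace is a nonzero scalar has rank at least
the quotient of the dimensions of the two factors. -/
lemma Matrix.PosSemidef.card_le_card_mul_rank {ι κ : Type*} [Fintype ι] [Fintype κ]
    [DecidableEq ι] [DecidableEq κ] {W : Matrix (ι × κ) (ι × κ) ℂ} (hW : W.PosSemidef)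
    {e : ℂ} (he : e ≠ 0) (htr : ∀ i j, ∑ p, W (i, p) (j, p) = e * (1 : Matrix ι ι ℂ) i j) :
    Fintype.card ι ≤ Fintype.card κ * W.rank := by
  obtain ⟨B, hB⟩ := hW.exists_eq_mul_conjTranspose
  let C : Matrix ι (κ × Fin W.rank) ℂ := Matrix.of fun i pk => B (i, pk.1) pk.2
  have hC : C * Cᴴ = e • 1 := by
    ext i j
    rw [smul_apply, smul_eq_mul, ← htr]
    conv_rhs => rw [hB]
    simp [Matrix.mul_apply, C, Fintype.sum_prod_type]
  calc Fintype.card ι = (e • (1 : Matrix ι ι ℂ)).rank := by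
        rw [rank_of_isUnit]
        rw [isUnit_iff_isUnit_det]
        simp [he]
    _ ≤ C.rank := hC ▸ rank_mul_le_left _ _
    _ ≤ Fintype.card (κ × Fin W.rank) := rank_le_card_width _
    _ = _ := by simp

/-- The Choi matrix is injective in the linear map. -/
lemma choi_injective (m n : ℕ) : Function.Injective (choi m n) := by
  intro L₁ L₂ h
  refine Matrix.ext_linearMap ℂ fun i j => LinearMap.ext_ring ?_
  ext p q
  exact congr_fun (congr_fun h (i, p)) (j, q)

/-- The Choi matrix of a channel is a Gram matrix. -/
lemma IsChannel.exists_choi_eq {m n : ℕ}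
    {L : Matrix (Fin m) (Fin m) ℂ →ₗ[ℂ] Matrix (Fin n) (Fin n) ℂ} (hL : IsChannel m n L) :
    ∃ (k : ℕ) (G : Matrix (Fin m × Fin n) (Fin k) ℂ), choi m n L = G * Gᴴ := by
  obtain ⟨k, A, hA, -⟩ := hL
  refine ⟨k, Matrix.of fun ip l => A l ip.2 ip.1, ?_⟩
  ext ⟨i, p⟩ ⟨j, q⟩
  simp [choi, hA, Matrix.sum_apply, Matrix.mul_apply, Matrix.single_apply, ite_and]

lemma IsChannel.posSemidef_choi {m n : ℕ}
    {L : Matrix (Fin m) (Fin m) ℂ →ₗ[ℂ] Matrix (Fin n) (Fin n) ℂ} (hL : IsChannel m n L) :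
    (choi m n L).PosSemidef := by
  obtain ⟨k, G, hG⟩ := hL.exists_choi_eq
  exact hG ▸ posSemidef_self_mul_conjTranspose G

lemma IsChannel.sum_choi {m n : ℕ}
    {L : Matrix (Fin m) (Fin m) ℂ →ₗ[ℂ] Matrix (Fin n) (Fin n) ℂ} (hL : IsChannel m n L)
    (i j : Fin m) :
    ∑ p, choi m n L (i, p) (j, p) = (1 : Matrix (Fin m) (Fin m) ℂ) i j := by
  obtain ⟨k, A, hA, hA1⟩ := hL
  rw [← transpose_one, transpose_apply, ← hA1]
  simp only [choi, hA, Matrix.sum_apply, Matrix.mul_apply, Matrix.single_apply, of_apply]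
  rw [Finset.sum_comm]
  simp [ite_and, mul_comm]

/-- If the Choi rank of a channel is at most `⌈m / min m n⌉`, any channel dominated by a multiple
of it equals it. -/
lemma IsChannel.eq_of_add_eq {m n : ℕ} (hm : 2 ≤ m) (hn : 2 ≤ n)
    {L L₁ L₂ : Matrix (Fin m) (Fin m) ℂ →ₗ[ℂ] Matrix (Fin n) (Fin n) ℂ}
    (hL : IsChannel m n L) (hL₁ : IsChannel m n L₁) (hL₂ : IsChannel m n L₂)
    (hrank : (choi m n L).rank ≤ (m + min m n - 1) / min m n)
    {t s : ℝ} (ht : 0 < t) (hs : 0 < s) (h : L = (t : ℂ) • L₁ + (s : ℂ) • L₂) : L₁ = L := by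
  have hZ : choi m n L = (t : ℂ) • choi m n L₁ + (s : ℂ) • choi m n L₂ := by
    rw [h]; ext; simp [choi]
  obtain ⟨k, G, hG⟩ := hL₁.exists_choi_eq
  obtain ⟨B, hB⟩ := hL.posSemidef_choi.exists_eq_mul_conjTranspose
  have hker : ∀ x, Bᴴ *ᵥ x = 0 → Gᴴ *ᵥ x = 0 := by
    intro x hx
    have h0 : star x ⬝ᵥ (choi m n L *ᵥ x) = 0 := by
      rw [hB, ← mulVec_mulVec, hx]; simp
    rw [hZ, add_mulVec, smul_mulVec, smul_mulVec, dotProduct_add, dotProduct_smul,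
      dotProduct_smul] at h0
    have h1 := hL₁.posSemidef_choi.dotProduct_mulVec_nonneg x
    have h2 := hL₂.posSemidef_choi.dotProduct_mulVec_nonneg x
    have ht' : (0 : ℂ) < t := by exact_mod_cast ht
    have hs' : (0 : ℂ) < s := by exact_mod_cast hs
    have h3 := ((add_eq_zero_iff_of_nonneg (mul_nonneg ht'.le h1) (mul_nonneg hs'.le h2)).1 h0).1
    have h4 := (mul_eq_zero.1 h3).resolve_left ht'.ne'
    rw [hL₁.posSemidef_choi.dotProduct_mulVec_zero_iff, hG] at h4
    exact (self_mul_conjTranspose_mulVec_eq_zero _ _).1 h4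
  obtain ⟨X, hX⟩ := Matrix.exists_eq_mul_of_ker_le _ _ hker
  have hZ₁ : choi m n L₁ = B * (Xᴴ * X) * Bᴴ := by
    rw [hG, hX, ← conjTranspose_conjTranspose G, hX, conjTranspose_mul]
    simp [Matrix.mul_assoc]
  have hlow := hL.posSemidef_choi.card_le_card_mul_rank one_ne_zero
    (fun i j => by rw [hL.sum_choi, one_mul])
  simp only [Fintype.card_fin] at hlow
  have hpos : 0 < (choi m n L).rank := by
    rcases Nat.eq_zero_or_pos (choi m n L).rank with h0 | h0
    · rw [h0] at hlow; omega
    · exact h0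
  have : Nonempty (Fin (choi m n L).rank) := ⟨⟨0, hpos⟩⟩
  obtain ⟨c, hc, hcr⟩ :=
    (posSemidef_conjTranspose_mul_self X).isHermitian.exists_smul_one_sub_posSemidef
  have hW : B * ((c : ℂ) • 1 - Xᴴ * X) * Bᴴ = (c : ℂ) • choi m n L - choi m n L₁ := by
    rw [hZ₁, Matrix.mul_sub, Matrix.sub_mul]
    congr 1
    conv_rhs => rw [hB]
    simp
  have hWpos := hc.mul_mul_conjTranspose_same B
  have hWrank : (B * ((c : ℂ) • 1 - Xᴴ * X) * Bᴴ).rank < (choi m n L).rank :=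
    ((rank_mul_le_left _ _).trans (rank_mul_le_right _ _)).trans_lt (by simpa using hcr)
  rw [hW] at hWpos hWrank
  have htr : ∀ i j, ∑ p, ((c : ℂ) • choi m n L - choi m n L₁) (i, p) (j, p) =
      ((c : ℂ) - 1) * (1 : Matrix (Fin m) (Fin m) ℂ) i j := by
    intro i j
    simp only [Matrix.sub_apply, Matrix.smul_apply, smul_eq_mul, Finset.sum_sub_distrib, ← Finset.mul_sum,
      hL.sum_choi, hL₁.sum_choi]
    ring
  have hc1 : (c : ℂ) - 1 = 0 := by
    by_contra hne
    have hle := hWpos.card_le_card_mul_rank hne htr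
    simp only [Fintype.card_fin] at hle
    have hle' : m ≤ n * ((choi m n L).rank - 1) :=
      hle.trans (Nat.mul_le_mul_left _ (by omega))
    rw [Nat.le_div_iff_mul_le (by omega)] at hrank
    obtain ⟨r, hr⟩ : ∃ r, (choi m n L).rank = r + 1 := ⟨_, (Nat.succ_pred_eq_of_pos hpos).symm⟩
    rw [hr] at hrank hle'
    rcases le_total m n with hmn | hmn
    · rw [min_eq_left hmn] at hrank
      rcases Nat.eq_zero_or_pos r with rfl | hr0
      · simp at hle'; omega
      · nlinarith [Nat.sub_add_cancel (show 1 ≤ m + m by omega)]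
    · rw [min_eq_right hmn] at hrank
      simp only [Nat.add_sub_cancel] at hle'
      have : (r + 1) * n = n * r + n := by ring
      omega
  have htrace : ((c : ℂ) • choi m n L - choi m n L₁).trace = 0 := by
    simp only [Matrix.trace, Matrix.diag, Fintype.sum_prod_type, htr, hc1, zero_mul,
      Finset.sum_const_zero]
  have hzero := (hWpos.trace_eq_zero_iff).1 htrace
  rw [sub_eq_zero.1 hc1, one_smul, sub_eq_zero] at hzero
  exact (choi_injective m n hzero).symm

/-- for `m,n ≥ 2`, every channel of Choi rank at most `k₀ = ⌈m / min(m,n)⌉` is an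
extreme point of `L_{m,n}`. -/
theorem stmt12 (m n : ℕ) (hm : 2 ≤ m) (hn : 2 ≤ n)
    (L : Matrix (Fin m) (Fin m) ℂ →ₗ[ℂ] Matrix (Fin n) (Fin n) ℂ)
    (hL : IsChannel m n L)
    (hrank : (choi m n L).rank ≤ (m + min m n - 1) / min m n) :
    IsExtremeChannel m n L := by
  refine ⟨hL, fun L₁ L₂ hL₁ hL₂ t ht0 ht1 h => ⟨?_, ?_⟩⟩
  · exact hL.eq_of_add_eq hm hn hL₁ hL₂ hrank ht0 (sub_pos.2 ht1) h
  · exact hL.eq_of_add_eq hm hn hL₂ hL₁ hrank (sub_pos.2 ht1) ht0 (h.trans (add_comm _ _))
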